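/- arXiv:2401.17442 — 4 statements merged into one kernel-verified Lean document; each statement's English description precedes it below -/
import Mathlib

section
/- Let m ≥ 1, x > 0, and let w, f₁, …, f_m : [0, x] → ℝ be measurable functions such that y ↦ y^{i−1} w(y) f_j(y) is integrable on [0, x] for all 1 ≤ i, j ≤ m. Then the integral over the ordered region {0 < y₁ < y₂ < ⋯ < y_m < x} of det[y_i^{j−1}]_{i,j=1,…,m} · det[f_j(y_i)]_{i,j=1,…,m} · ∏_{k=1}^m w(y_k) with respect to dy₁⋯dy_m equals det[ ∫₀ˣ y^{i−1} f_j(y) w(y) dy ]_{i,j=1,…,m}. -/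
open MeasureTheory

lemma andreief_ae_inj (m : ℕ) : ∀ᵐ y : Fin m → ℝ, Function.Injective y := by
  have h : ∀ i j : Fin m, i ≠ j → ∀ᵐ y : Fin m → ℝ, y i ≠ y j := by
    intro i j hij
    have := Measure.addHaar_submodule (volume : Measure (Fin m → ℝ))
      (LinearMap.ker (LinearMap.proj (R := ℝ) (φ := fun _ : Fin m => ℝ) i
        - LinearMap.proj (R := ℝ) (φ := fun _ : Fin m => ℝ) j)) (by
        intro h
        have h2 : (Pi.single i 1 : Fin m → ℝ) ∈ (⊤ : Submodule ℝ (Fin m → ℝ)) := trivial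
        rw [← h] at h2
        simp [hij.symm] at h2)
    rw [ae_iff]
    convert this using 2
    ext y
    simp [sub_eq_zero]
  have h2 : ∀ᵐ y : Fin m → ℝ, ∀ i j : Fin m, i ≠ j → y i ≠ y j := by
    rw [ae_all_iff]; intro i
    rw [ae_all_iff]; intro j
    by_cases hij : i = j
    · simp [hij]
    · filter_upwards [h i j hij] with y hy _ using hy
  filter_upwards [h2] with y hy i j hij
  by_contra hne
  exact hy i j hne hij

/-- Permuting coordinates as a measurable equivalence. -/
def andreiefPerm (m : ℕ) (σ : Equiv.Perm (Fin m)) : (Fin m → ℝ) ≃ᵐ (Fin m → ℝ) where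
  toFun y := y ∘ σ
  invFun y := y ∘ σ.symm
  left_inv y := by ext; simp
  right_inv y := by ext; simp
  measurable_toFun := by
    apply measurable_pi_lambda; intro a; exact measurable_pi_apply _
  measurable_invFun := by
    apply measurable_pi_lambda; intro a; exact measurable_pi_apply _

lemma andreiefPerm_mp (m : ℕ) (σ : Equiv.Perm (Fin m)) :
    MeasurePreserving (andreiefPerm m σ) := by
  have h := volume_measurePreserving_piCongrLeft (fun _ : Fin m => ℝ) σ.symm
  have he : (andreiefPerm m σ : (Fin m → ℝ) → Fin m → ℝ)
      = MeasurableEquiv.piCongrLeft (fun _ : Fin m => ℝ) σ.symm := by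
    funext y
    funext i
    obtain ⟨k, rfl⟩ := σ.symm.surjective i
    erw [MeasurableEquiv.piCongrLeft_apply_apply]
    simp [andreiefPerm]
  rw [he]
  exact h

/-- integrate over sector pieces -/
lemma andreief_sectors (m : ℕ) (x : ℝ) (H : (Fin m → ℝ) → ℝ)
    (hH : IntegrableOn H {y | ∀ k, y k ∈ Set.Ioo 0 x}) :
    ∫ y in {y : Fin m → ℝ | StrictMono y ∧ ∀ k, y k ∈ Set.Ioo 0 x},
      ∑ σ : Equiv.Perm (Fin m), H (y ∘ σ) = ∫ y in {y | ∀ k, y k ∈ Set.Ioo 0 x}, H y := by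
  set D := {y : Fin m → ℝ | StrictMono y ∧ ∀ k, y k ∈ Set.Ioo 0 x} with hD
  set B := {y : Fin m → ℝ | ∀ k, y k ∈ Set.Ioo 0 x} with hB
  have hDm : MeasurableSet D := by
    have : D = (⋂ i : Fin m, ⋂ j : Fin m, ⋂ _ : i < j, {y | y i < y j}) ∩
        ⋂ k, {y | 0 < y k} ∩ {y | y k < x} := by
      ext y
      simp [hD, StrictMono]
    rw [this]
    refine MeasurableSet.inter (MeasurableSet.iInter fun i => MeasurableSet.iInter fun j =>
      MeasurableSet.iInter fun _ => measurableSet_lt (measurable_pi_apply _) (measurable_pi_apply _))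
      (MeasurableSet.iInter fun k => MeasurableSet.inter
        (measurableSet_lt measurable_const (measurable_pi_apply _))
        (measurableSet_lt (measurable_pi_apply _) measurable_const))
  let S : Equiv.Perm (Fin m) → Set (Fin m → ℝ) := fun σ => (andreiefPerm m σ.symm) ⁻¹' D
  have hSm : ∀ σ, MeasurableSet (S σ) := fun σ => (andreiefPerm m σ.symm).measurable hDm
  have hSB : ∀ σ, S σ ⊆ B := by
    intro σ y hy k
    have := hy.2 (σ k)
    simpa [andreiefPerm] using this
  have hpre : ∀ σ, (andreiefPerm m σ) ⁻¹' (S σ) = D := by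
    intro σ
    ext y
    have : (y ∘ σ) ∘ σ.symm = y := by ext; simp
    change (y ∘ σ) ∘ σ.symm ∈ D ↔ _
    rw [this]
  have hdisj : Pairwise (Function.onFun Disjoint S) := by
    intro σ τ hne
    rw [Function.onFun, Set.disjoint_left]
    intro y h1 h2
    apply hne
    have hs1 : StrictMono (y ∘ σ.symm) := h1.1
    have hs2 : StrictMono (y ∘ τ.symm) := h2.1
    have hr : y ∘ σ.symm = y ∘ τ.symm := by
      apply (StrictMono.range_inj hs1 hs2).1
      rw [σ.symm.surjective.range_comp, τ.symm.surjective.range_comp]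
    have hinj : Function.Injective y := by
      intro a b hab
      have := hs1.injective (a₁ := σ a) (a₂ := σ b) (by simpa using hab)
      exact σ.injective this
    have : σ.symm = τ.symm := by
      ext a
      exact congrArg _ (hinj (congrFun hr a))
    simpa using congrArg Equiv.symm this
  have hU : (⋃ σ, S σ) =ᵐ[volume] B := by
    filter_upwards [andreief_ae_inj m] with y hy
    apply propext
    constructor
    · intro h
      obtain ⟨σ, hσ⟩ := Set.mem_iUnion.1 h
      exact hSB σ hσ
    · intro h
      refine Set.mem_iUnion.2 ⟨(Tuple.sort y).symm, ?_⟩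
      change y ∘ (Tuple.sort y) ∈ D
      exact ⟨(Tuple.monotone_sort y).strictMono_of_injective
        (hy.comp (Tuple.sort y).injective), fun k => h _⟩
  have hcv : ∀ σ : Equiv.Perm (Fin m), ∫ y in D, H (y ∘ σ) = ∫ y in S σ, H y := by
    intro σ
    rw [← (andreiefPerm_mp m σ).setIntegral_preimage_emb
      (andreiefPerm m σ).measurableEmbedding H (S σ), hpre]
    rfl
  rw [integral_finsetSum, Finset.sum_congr rfl fun σ _ => hcv σ,
    ← setIntegral_congr_set hU, integral_iUnion_fintype hSm hdisj]
  · exact fun σ => hH.mono_set (hSB σ)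
  · intro σ _
    have := ((andreiefPerm_mp m σ).integrableOn_comp_preimage
      (andreiefPerm m σ).measurableEmbedding (f := H) (s := S σ)).2 (hH.mono_set (hSB σ))
    rw [hpre] at this
    exact this

/-- Andréief-type integration identity (Corollary 2 of Chiani): the integral over the
ordered region `{0 < y₁ < ⋯ < y_m < x}` of the product of the Vandermonde determinant
`det[y_i^{j−1}]`, the determinant `det[f_j(y_i)]`, and the weights `∏ w(y_k)` equals the
determinant of one-dimensional integrals `det[∫₀ˣ y^{i−1} f_j(y) w(y) dy]`. -/
theorem andreief_identity (m : ℕ) (hm : 1 ≤ m) (x : ℝ) (hx : 0 < x)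
    (w : ℝ → ℝ) (f : Fin m → ℝ → ℝ)
    (hw : Measurable w) (hf : ∀ j, Measurable (f j))
    (hint : ∀ i j : Fin m,
      IntegrableOn (fun y => y ^ (i : ℕ) * w y * f j y) (Set.Ioc 0 x)) :
    (∫ y in {y : Fin m → ℝ | StrictMono y ∧ ∀ k, y k ∈ Set.Ioo 0 x},
        (Matrix.det (Matrix.of fun i j : Fin m => y i ^ (j : ℕ)))
          * (Matrix.det (Matrix.of fun i j : Fin m => f j (y i)))
          * ∏ k, w (y k))
      = Matrix.det (Matrix.of fun i j : Fin m =>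
          ∫ y in Set.Ioc (0 : ℝ) x, y ^ (i : ℕ) * f j y * w y) := by
  let H : (Fin m → ℝ) → ℝ := fun y => ∑ σ : Equiv.Perm (Fin m),
    ((Equiv.Perm.sign σ : ℤ) : ℝ) * ∏ i, (y i ^ (σ i : ℕ) * f i (y i) * w (y i))
  have hHdet : ∀ y, H y = Matrix.det (Matrix.of fun i j : Fin m => y i ^ (j : ℕ))
      * ∏ i, (f i (y i) * w (y i)) := by
    intro y
    rw [← Matrix.det_transpose, Matrix.det_apply', Finset.sum_mul]
    refine Finset.sum_congr rfl fun σ _ => ?_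
    rw [mul_assoc, ← Finset.prod_mul_distrib]
    simp [mul_assoc]
  have hG : ∀ y : Fin m → ℝ, (Matrix.det (Matrix.of fun i j : Fin m => y i ^ (j : ℕ)))
          * (Matrix.det (Matrix.of fun i j : Fin m => f j (y i)))
          * ∏ k, w (y k) = ∑ σ : Equiv.Perm (Fin m), H (y ∘ σ) := by
    intro y
    rw [Matrix.det_apply' (Matrix.of fun i j : Fin m => f j (y i)), Finset.mul_sum,
      Finset.sum_mul]
    refine Finset.sum_congr rfl fun σ _ => ?_
    rw [hHdet]
    have h1 := Matrix.det_permute σ (Matrix.of fun i j : Fin m => y i ^ (j : ℕ))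
    have h2 : (Matrix.of fun i j : Fin m => y i ^ (j : ℕ)).submatrix σ id
      = Matrix.of fun i j : Fin m => (y ∘ σ) i ^ (j : ℕ) := rfl
    rw [h2] at h1
    rw [h1, Finset.prod_mul_distrib, ← Equiv.prod_comp σ (fun k => w (y k))]
    simp only [Matrix.of_apply, Function.comp]
    ring
  have hμ : (volume : Measure (Fin m → ℝ)).restrict {y | ∀ k, y k ∈ Set.Ioo 0 x}
      = Measure.pi fun _ : Fin m => (volume : Measure ℝ).restrict (Set.Ioc 0 x) := by
    have h1 : {y : Fin m → ℝ | ∀ k, y k ∈ Set.Ioo 0 x}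
        = Set.pi Set.univ fun _ => Set.Ioo 0 x := by ext; simp
    rw [h1, volume_pi, Measure.restrict_pi_pi]
    congr 1
    ext1 k
    exact Measure.restrict_congr_set Ioo_ae_eq_Ioc
  have hterm : ∀ σ : Equiv.Perm (Fin m), Integrable
      (fun y : Fin m → ℝ => ∏ i, (y i ^ (σ i : ℕ) * f i (y i) * w (y i)))
      (Measure.pi fun _ : Fin m => (volume : Measure ℝ).restrict (Set.Ioc 0 x)) := by
    intro σ
    refine Integrable.fintype_prod (f := fun i t => t ^ (σ i : ℕ) * f i t * w t) fun i => ?_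
    refine (hint (σ i) i).congr (Filter.Eventually.of_forall fun t => ?_)
    simp only
    ring
  simp_rw [hG]
  rw [andreief_sectors m x H, hμ, integral_finsetSum, Matrix.det_apply']
  · refine Finset.sum_congr rfl fun σ _ => ?_
    rw [integral_const_mul]
    congr 1
    exact integral_fintype_prod_eq_prod (fun i t => t ^ (σ i : ℕ) * f i t * w t)
  · exact fun σ _ => (hterm σ).const_mul _
  · rw [IntegrableOn, hμ]
    exact integrable_finsetSum _ fun σ _ => (hterm σ).const_mul _
end

section
/- Let a be a real number, b > 0, c > 0, α a nonnegative integer, x ∈ (0,1), and ℓ a nonnegative integer. Define φ(θ) = ∫₀ˣ y^{c−1} (1−y)^α ₁F₁(a; b; θy) dy for θ ∈ ℝ. Then φ is ℓ-times differentiable at θ = 0 and its ℓ-th derivative at θ = 0 equals ((a)_ℓ/(b)_ℓ) ∫₀ˣ y^{c+ℓ−1} (1−y)^α dy. -/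
open MeasureTheory

/-- The rising factorial `(a)_k = a(a+1)⋯(a+k−1)`, with `(a)_0 = 1`. -/
noncomputable def risingFactorial (a : ℝ) (k : ℕ) : ℝ :=
  ∏ i ∈ Finset.range k, (a + i)

/-- The confluent hypergeometric function `₁F₁(a; b; z) = ∑ (a)_k/((b)_k k!) z^k`. -/
noncomputable def oneF1 (a b z : ℝ) : ℝ :=
  ∑' k : ℕ, risingFactorial a k / (risingFactorial b k * (k.factorial : ℝ)) * z ^ k

lemma coef_bound (a b : ℝ) (hb : 0 < b) (k : ℕ) :
    |risingFactorial a k / (risingFactorial b k * (k.factorial : ℝ))|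
      ≤ (|a| / b + 1) ^ k / (k.factorial : ℝ) := by
  induction k with
  | zero => simp [risingFactorial]
  | succ k ih =>
    have hk : (0 : ℝ) ≤ k := Nat.cast_nonneg k
    have h1 : risingFactorial a (k + 1) / (risingFactorial b (k + 1) * ((k + 1).factorial : ℝ))
        = risingFactorial a k / (risingFactorial b k * (k.factorial : ℝ))
          * ((a + k) / (b + k) / (k + 1)) := by
      simp only [risingFactorial, Finset.prod_range_succ, Nat.factorial_succ]
      push_cast
      simp only [div_eq_mul_inv, mul_inv]
      ring
    have h2 : |(a + k) / (b + k) / ((k : ℝ) + 1)| ≤ (|a| / b + 1) / (k + 1) := by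
      rw [abs_div, abs_of_pos (by positivity : (0 : ℝ) < (k : ℝ) + 1)]
      gcongr
      rw [abs_div, abs_of_pos (by positivity : (0 : ℝ) < b + k),
        div_le_iff₀ (by positivity : (0 : ℝ) < b + k)]
      have h3 : |a + k| ≤ |a| + k := by
        simpa [abs_of_nonneg hk] using abs_add_le a (k : ℝ)
      have h4 : (|a| / b + 1) * (b + k) = |a| + k + (b + |a| / b * k) := by
        field_simp
        ring
      have h5 : 0 ≤ b + |a| / b * k := by positivity
      linarith
    rw [h1, abs_mul]
    calc _ ≤ (|a| / b + 1) ^ k / (k.factorial : ℝ) * ((|a| / b + 1) / (k + 1)) := by gcongr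
      _ = _ := by
        rw [Nat.factorial_succ]
        push_cast
        rw [div_mul_div_comm, pow_succ, mul_comm (k.factorial : ℝ)]

lemma coef_summable (a b : ℝ) (hb : 0 < b) (r : ℝ) :
    Summable fun k : ℕ =>
      |risingFactorial a k / (risingFactorial b k * (k.factorial : ℝ)) * r ^ k| := by
  refine Summable.of_nonneg_of_le (fun _ => abs_nonneg _) (fun k => ?_)
    (Real.summable_pow_div_factorial ((|a| / b + 1) * |r|))
  rw [abs_mul, abs_pow, mul_pow, mul_div_right_comm]
  gcongr
  exact coef_bound a b hb k

lemma weight_integrable (c : ℝ) (hc : 0 < c) (α : ℕ) (x : ℝ) (hx : 0 < x) :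
    IntegrableOn (fun y : ℝ => y ^ (c - 1) * (1 - y) ^ α) (Set.Ioc 0 x) := by
  rw [← intervalIntegrable_iff_integrableOn_Ioc_of_le hx.le]
  refine (intervalIntegral.intervalIntegrable_rpow' (by linarith)).mul_continuousOn ?_
  fun_prop

lemma weight_pow (c : ℝ) (α : ℕ) (x : ℝ) (k : ℕ) :
    ∫ y in Set.Ioc (0 : ℝ) x, y ^ (c - 1) * (1 - y) ^ α * y ^ k
      = ∫ y in Set.Ioc (0 : ℝ) x, y ^ (c + k - 1) * (1 - y) ^ α := by
  refine setIntegral_congr_fun measurableSet_Ioc (fun y hy => ?_)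
  have : c + k - 1 = (c - 1) + k := by ring
  simp only [this, Real.rpow_add hy.1, Real.rpow_natCast]
  ring

lemma phi_hasSum (a b c : ℝ) (hb : 0 < b) (hc : 0 < c)
    (α : ℕ) (x : ℝ) (hx : x ∈ Set.Ioo (0 : ℝ) 1) (θ : ℝ) :
    HasSum (fun k : ℕ => θ ^ k * (risingFactorial a k / (risingFactorial b k * (k.factorial : ℝ))
        * ∫ y in Set.Ioc (0 : ℝ) x, y ^ (c + k - 1) * (1 - y) ^ α))
      (∫ y in Set.Ioc (0 : ℝ) x, y ^ (c - 1) * (1 - y) ^ α * oneF1 a b (θ * y)) := by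
  have hw := weight_integrable c hc α x hx.1
  set w : ℝ → ℝ := fun y => y ^ (c - 1) * (1 - y) ^ α with hwdef
  set A : ℕ → ℝ := fun k => risingFactorial a k / (risingFactorial b k * (k.factorial : ℝ)) with hA
  let F : ℕ → ℝ → ℝ := fun k y => w y * (A k * (θ * y) ^ k)
  have hbd : ∀ k, ∀ y ∈ Set.Ioc (0 : ℝ) x, ‖F k y‖ ≤ |A k * θ ^ k| * ‖w y‖ := by
    intro k y hy
    have hy1 : |y| ^ k ≤ 1 := pow_le_one₀ (abs_nonneg y)
      (by rw [abs_of_pos hy.1]; linarith [hy.2, hx.2])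
    simp only [F, Real.norm_eq_abs, abs_mul, abs_pow, mul_pow]
    have h0 : 0 ≤ |A k| * |θ| ^ k * |w y| := by positivity
    nlinarith
  have hFi : ∀ k, Integrable (F k) (volume.restrict (Set.Ioc (0 : ℝ) x)) := by
    intro k
    refine Integrable.mono' (hw.norm.const_mul |A k * θ ^ k|) ?_ ?_
    · exact hw.aestronglyMeasurable.mul (by fun_prop)
    · exact (ae_restrict_iff' measurableSet_Ioc).2 (Filter.Eventually.of_forall (hbd k))
  have hsum : Summable fun k => ∫ y in Set.Ioc (0 : ℝ) x, ‖F k y‖ := by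
    refine Summable.of_nonneg_of_le (fun k => integral_nonneg fun y => norm_nonneg _)
      (fun k => ?_) ((coef_summable a b hb θ).mul_right (∫ y in Set.Ioc (0 : ℝ) x, ‖w y‖))
    rw [← integral_const_mul]
    exact setIntegral_mono_on (hFi k).norm (hw.norm.const_mul _) measurableSet_Ioc (hbd k)
  have key := hasSum_integral_of_summable_integral_norm hFi hsum
  convert key using 1
  · rfl
  · funext k
    rw [← weight_pow, ← mul_assoc, ← integral_const_mul]
    congr 1
    funext y
    simp only [F, A, w, mul_pow]
    ring
  · congr 1
    funext y
    simp only [F, oneF1, A]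
    rw [tsum_mul_left]

/-- The ℓ-th derivative at `θ = 0` of `φ(θ) = ∫₀ˣ y^{c−1}(1−y)^α ₁F₁(a;b;θy) dy` equals
`((a)_ℓ/(b)_ℓ) ∫₀ˣ y^{c+ℓ−1}(1−y)^α dy`. -/
theorem deriv_phi_at_zero (a b c : ℝ) (hb : 0 < b) (hc : 0 < c)
    (α : ℕ) (x : ℝ) (hx : x ∈ Set.Ioo (0 : ℝ) 1) (ℓ : ℕ)
    (φ : ℝ → ℝ)
    (hφ : ∀ θ : ℝ, φ θ =
      ∫ y in Set.Ioc (0 : ℝ) x, y ^ (c - 1) * (1 - y) ^ α * oneF1 a b (θ * y)) :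
    ContDiffAt ℝ ℓ φ 0 ∧
      iteratedDeriv ℓ φ 0 =
        risingFactorial a ℓ / risingFactorial b ℓ *
          ∫ y in Set.Ioc (0 : ℝ) x, y ^ (c + ℓ - 1) * (1 - y) ^ α := by
  set d : ℕ → ℝ := fun k => risingFactorial a k / (risingFactorial b k * (k.factorial : ℝ))
        * ∫ y in Set.Ioc (0 : ℝ) x, y ^ (c + k - 1) * (1 - y) ^ α with hd
  have hp : HasFPowerSeriesAt φ (FormalMultilinearSeries.ofScalars ℝ d) 0 := by
    rw [hasFPowerSeriesAt_iff]
    refine Filter.Eventually.of_forall fun θ => ?_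
    simp only [FormalMultilinearSeries.coeff_ofScalars, zero_add, smul_eq_mul, hφ, hd]
    exact phi_hasSum a b c hb hc α x hx θ
  have han : AnalyticAt ℝ φ 0 := ⟨_, hp⟩
  refine ⟨han.contDiffAt, ?_⟩
  have h := congrArg (fun p => FormalMultilinearSeries.coeff p ℓ)
    (han.hasFPowerSeriesAt.eq_formalMultilinearSeries hp)
  simp only [FormalMultilinearSeries.coeff_ofScalars, hd] at h
  have hf : (ℓ.factorial : ℝ) ≠ 0 := by positivity
  rw [div_eq_iff hf] at h
  rw [h, ← div_div]
  field_simp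
end

section
/- Let a be real, b > 0, c > 0, α a nonnegative integer, θ ∈ ℝ, and x ∈ (0,1). Then ∫₀ˣ y^{c−1} (1−y)^α ₁F₁(a; b; θy) dy = ∑_{k=0}^{α} (−1)^k binom(α,k) (x^{c+k}/(c+k)) · ₂F₂(a, c+k; b, c+k+1; θx). -/
open MeasureTheory

/-- The generalized hypergeometric function
`₂F₂(a₁,a₂;b₁,b₂;z) = ∑ (a₁)_k (a₂)_k/((b₁)_k (b₂)_k k!) z^k`. -/
noncomputable def twoF2 (a₁ a₂ b₁ b₂ z : ℝ) : ℝ :=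
  ∑' k : ℕ, risingFactorial a₁ k * risingFactorial a₂ k /
    (risingFactorial b₁ k * risingFactorial b₂ k * (k.factorial : ℝ)) * z ^ k

theorem rf_pos {b : ℝ} (hb : 0 < b) (k : ℕ) : 0 < risingFactorial b k :=
  Finset.prod_pos fun i _ => by positivity

theorem rf_ratio {d : ℝ} (hd : 0 < d) (k : ℕ) :
    risingFactorial d k / risingFactorial (d + 1) k = d / (d + k) := by
  induction k with
  | zero => simp [risingFactorial, hd.ne']
  | succ n ih =>
    have h1 := (rf_pos hd n).ne'
    have h2 := (rf_pos (by positivity : 0 < d + 1) n).ne'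
    have h3 : d + n ≠ 0 := by positivity
    have h4 : d + 1 + n ≠ 0 := by positivity
    have h5 : d + (n + 1 : ℕ) ≠ 0 := by positivity
    have e : ∀ a, risingFactorial a (n + 1) = risingFactorial a n * (a + n) := fun a => by
      simp [risingFactorial, Finset.prod_range_succ]
    rw [e, e, mul_div_mul_comm, ih]
    push_cast at *
    field_simp
    ring

theorem summable_coef (a b z : ℝ) (hb : 0 < b) :
    Summable fun k : ℕ =>
      risingFactorial a k / (risingFactorial b k * (k.factorial : ℝ)) * z ^ k := by
  refine summable_of_ratio_norm_eventually_le (r := 1 / 2) (by norm_num) ?_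
  obtain ⟨N, hN⟩ := exists_nat_ge (2 * (|a| + 1) * |z|)
  filter_upwards [Filter.eventually_ge_atTop N, Filter.eventually_ge_atTop 1] with k hk hk1
  have e : ∀ a, risingFactorial a (k + 1) = risingFactorial a k * (a + k) := fun a => by
    simp [risingFactorial, Finset.prod_range_succ]
  have hk' : (1 : ℝ) ≤ k := by exact_mod_cast hk1
  have hkN : (N : ℝ) ≤ k := by exact_mod_cast hk
  have hB := rf_pos hb k
  have hf : (0 : ℝ) < k.factorial := by positivity
  have key : risingFactorial a (k + 1) / (risingFactorial b (k + 1) * ((k + 1).factorial : ℝ))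
      * z ^ (k + 1) = ((a + k) * z / ((b + k) * (k + 1))) *
      (risingFactorial a k / (risingFactorial b k * (k.factorial : ℝ)) * z ^ k) := by
    rw [e, e, Nat.factorial_succ]
    push_cast
    have : b + k ≠ 0 := by positivity
    rw [pow_succ]
    field_simp
  rw [key, norm_mul]
  refine mul_le_mul_of_nonneg_right ?_ (norm_nonneg _)
  rw [Real.norm_eq_abs, abs_div, abs_mul, abs_of_pos (by positivity : 0 < (b + k) * ((k : ℝ) + 1)),
    div_le_iff₀ (by positivity)]
  have h1 : |a + k| ≤ (|a| + 1) * k := by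
    have := abs_add_le a k
    rw [Nat.abs_cast] at this
    nlinarith [abs_nonneg a]
  calc |a + k| * |z| ≤ (|a| + 1) * k * |z| := by gcongr
    _ ≤ 1 / 2 * (k * k) := by nlinarith
    _ ≤ _ := by nlinarith

theorem integrable_rpow_Ioc {d : ℝ} (hd : 0 < d) (x : ℝ) (hx : 0 < x) :
    IntegrableOn (fun y : ℝ => y ^ (d - 1)) (Set.Ioc 0 x) := by
  have := intervalIntegral.intervalIntegrable_rpow' (a := 0) (b := x) (r := d - 1) (by linarith)
  exact (intervalIntegrable_iff_integrableOn_Ioc_of_le hx.le).1 this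

theorem integral_rpow_Ioc {d : ℝ} (hd : 0 < d) (x : ℝ) (hx : 0 < x) :
    ∫ y in Set.Ioc 0 x, y ^ (d - 1) = x ^ d / d := by
  rw [← intervalIntegral.integral_of_le hx.le, integral_rpow (Or.inl (by linarith))]
  simp [Real.zero_rpow hd.ne']

theorem twoF2_term (a b d z : ℝ) (hd : 0 < d) (k : ℕ) :
    risingFactorial a k * risingFactorial d k /
    (risingFactorial b k * risingFactorial (d + 1) k * (k.factorial : ℝ)) * z ^ k
    = d / (d + k) * (risingFactorial a k / (risingFactorial b k * (k.factorial : ℝ)) * z ^ k) := by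
  rw [← rf_ratio hd k]
  simp only [div_eq_mul_inv, mul_inv]
  ring

theorem summable_twoF2 (a b d z : ℝ) (hb : 0 < b) (hd : 0 < d) :
    Summable fun k : ℕ => risingFactorial a k * risingFactorial d k /
    (risingFactorial b k * risingFactorial (d + 1) k * (k.factorial : ℝ)) * z ^ k := by
  refine Summable.of_norm_bounded (summable_coef a b z hb).norm fun k => ?_
  rw [twoF2_term a b d z hd, norm_mul]
  refine mul_le_of_le_one_left (norm_nonneg _) ?_
  rw [Real.norm_eq_abs, abs_of_nonneg (by positivity)]
  exact div_le_one_of_le₀ (by linarith [(Nat.cast_nonneg k : (0:ℝ) ≤ k)]) (by positivity)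

/-- Closed form of `φ_i(x,θ)`:
`∫₀ˣ y^{c−1}(1−y)^α ₁F₁(a;b;θy) dy
  = ∑_{k=0}^α (−1)^k C(α,k) (x^{c+k}/(c+k)) ₂F₂(a, c+k; b, c+k+1; θx)`. -/
theorem phi_closed_form (a b c : ℝ) (hb : 0 < b) (hc : 0 < c)
    (α : ℕ) (θ : ℝ) (x : ℝ) (hx : x ∈ Set.Ioo (0 : ℝ) 1) :
    (∫ y in Set.Ioc (0 : ℝ) x, y ^ (c - 1) * (1 - y) ^ α * oneF1 a b (θ * y))
      = ∑ k ∈ Finset.range (α + 1),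
          (-1 : ℝ) ^ k * (α.choose k : ℝ) * (x ^ (c + k) / (c + k)) *
            twoF2 a (c + k) b (c + k + 1) (θ * x) := by
  obtain ⟨hx0, hx1⟩ := hx
  set q : ℕ → ℝ := fun k => risingFactorial a k / (risingFactorial b k * (k.factorial : ℝ)) with hq
  set F : ℕ → ℝ → ℝ := fun k y => y ^ (c - 1) * (1 - y) ^ α * (q k * (θ * y) ^ k) with hF
  have hd : ∀ j k : ℕ, 0 < c + j + k := fun j k => by positivity
  have hFexp : ∀ k, Set.EqOn (F k) (fun y => ∑ j ∈ Finset.range (α + 1),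
      ((-1) ^ j * (α.choose j : ℝ) * (q k * θ ^ k)) * y ^ (c + j + k - 1)) (Set.Ioc 0 x) := by
    intro k y hy
    have hy0 : 0 < y := hy.1
    have e : (1 - y) ^ α = ∑ j ∈ Finset.range (α + 1), (-1) ^ j * (α.choose j : ℝ) * y ^ j := by
      rw [show 1 - y = -y + 1 by ring, add_pow]
      refine Finset.sum_congr rfl fun j _ => ?_
      rw [neg_pow]; simp; ring
    simp only [hF]
    rw [e, Finset.mul_sum, Finset.sum_mul]
    refine Finset.sum_congr rfl fun j _ => ?_
    rw [show c + j + k - 1 = (c - 1) + j + k by ring, Real.rpow_add hy0, Real.rpow_add hy0,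
      Real.rpow_natCast, Real.rpow_natCast, mul_pow]
    ring
  have hint : ∀ k, IntegrableOn (F k) (Set.Ioc 0 x) := by
    intro k
    refine IntegrableOn.congr_fun ?_ (hFexp k).symm measurableSet_Ioc
    refine integrable_finsetSum _ fun j _ => ?_
    exact (integrable_rpow_Ioc (hd j k) x hx0).const_mul _
  have hval : ∀ k, ∫ y in Set.Ioc 0 x, F k y = ∑ j ∈ Finset.range (α + 1),
      (-1 : ℝ) ^ j * (α.choose j : ℝ) * (x ^ (c + j) / (c + j)) *
      (risingFactorial a k * risingFactorial (c + j) k /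
    (risingFactorial b k * risingFactorial (c + j + 1) k * (k.factorial : ℝ)) * (θ * x) ^ k) := by
    intro k
    rw [setIntegral_congr_fun measurableSet_Ioc (hFexp k), integral_finsetSum]
    · refine Finset.sum_congr rfl fun j _ => ?_
      have hcj : 0 < c + (j : ℝ) := by positivity
      rw [integral_const_mul, integral_rpow_Ioc (hd j k) x hx0, twoF2_term _ _ _ _ hcj,
        Real.rpow_add hx0 (c + j), Real.rpow_natCast, mul_pow]
      have := (hd j k).ne'
      simp only [hq]
      have := (rf_pos hb k).ne'
      field_simp
    · intro j _
      exact (integrable_rpow_Ioc (hd j k) x hx0).const_mul _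
  have hsum : Summable fun k => ∫ y in Set.Ioc 0 x, ‖F k y‖ := by
    refine Summable.of_nonneg_of_le (fun k => integral_nonneg fun _ => norm_nonneg _) (fun k => ?_)
      ((summable_coef a b θ hb).norm.mul_right (∫ y in Set.Ioc 0 x, y ^ (c - 1)))
    rw [← integral_const_mul]
    refine setIntegral_mono_on (hint k).norm ((integrable_rpow_Ioc hc x hx0).const_mul _)
      measurableSet_Ioc fun y hy => ?_
    have hy0 : 0 < y := hy.1
    have hy1 : y ≤ 1 := hy.2.trans hx1.le
    have : F k y = (q k * θ ^ k) * y ^ (c - 1) * ((1 - y) ^ α * y ^ k) := by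
      simp only [hF, mul_pow]; ring
    have h1 : (1 - y) ^ α * y ^ k ≤ 1 :=
      mul_le_one₀ (pow_le_one₀ (by linarith) (by linarith)) (by positivity)
        (pow_le_one₀ hy0.le hy1)
    have h0 : 0 ≤ (1 - y) ^ α * y ^ k :=
      mul_nonneg (pow_nonneg (by linarith) _) (by positivity)
    rw [this, norm_mul, norm_mul, Real.norm_of_nonneg h0,
      Real.norm_of_nonneg (Real.rpow_nonneg hy0.le _)]
    exact mul_le_of_le_one_right (by positivity) h1
  have main := integral_tsum_of_summable_integral_norm hint hsum
  have hL : ∀ y, y ^ (c - 1) * (1 - y) ^ α * oneF1 a b (θ * y) = ∑' k, F k y := fun y => by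
    simp only [hF, hq, oneF1, tsum_mul_left]
  simp only [hL]
  rw [← main]
  simp only [hval]
  rw [Summable.tsum_finsetSum]
  · refine Finset.sum_congr rfl fun j _ => ?_
    rw [tsum_mul_left, twoF2]
  · intro j _
    exact (summable_twoF2 a b (c + j) (θ * x) hb (by positivity)).mul_left _
end

section
/- Let c₁, c₂ ∈ (0,1), set r = √(c₁ + c₂ − c₁c₂), and let γ be real with γ > (c₂ + r)/(1 − c₂). Then (γ + c₁)(1 + γ)/(γ − (1+γ)c₂) > ((1 + r)/(1 − c₂))². -/
/-- Above the phase transition the spiked limit exceeds the bulk edge: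
for `γ > (c₂+r)/(1−c₂)` one has `(γ+c₁)(1+γ)/(γ−(1+γ)c₂) > ((1+r)/(1−c₂))²`. -/
theorem spiked_limit_above_bulk_edge (c₁ c₂ : ℝ)
    (hc₁ : c₁ ∈ Set.Ioo (0 : ℝ) 1) (hc₂ : c₂ ∈ Set.Ioo (0 : ℝ) 1)
    (r : ℝ) (hr : r = Real.sqrt (c₁ + c₂ - c₁ * c₂))
    (γ : ℝ) (hγ : γ > (c₂ + r) / (1 - c₂)) :
    (γ + c₁) * (1 + γ) / (γ - (1 + γ) * c₂) > ((1 + r) / (1 - c₂)) ^ 2 := by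
  obtain ⟨h1, h1'⟩ := hc₁
  obtain ⟨h2, h2'⟩ := hc₂
  have hd : 0 < 1 - c₂ := by linarith
  have hr0 : 0 ≤ r := hr ▸ Real.sqrt_nonneg _
  have hr2 : r ^ 2 = c₁ + c₂ - c₁ * c₂ := by
    rw [hr]
    exact Real.sq_sqrt (by nlinarith)
  have ht : r < γ - (1 + γ) * c₂ := by
    have h := (div_lt_iff₀ hd).1 hγ
    linarith
  have ht0 : 0 < γ - (1 + γ) * c₂ := by linarith
  rw [gt_iff_lt, div_pow, div_lt_div_iff₀ (by positivity) ht0]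
  have hpos : 0 < (γ - (1 + γ) * c₂ - r) ^ 2 := by
    have : 0 < γ - (1 + γ) * c₂ - r := by linarith
    positivity
  have key : (γ + c₁) * (1 + γ) * (1 - c₂) ^ 2 - (1 + r) ^ 2 * (γ - (1 + γ) * c₂)
      = (γ - (1 + γ) * c₂ - r) ^ 2 := by
    linear_combination (-(γ - (1 + γ) * c₂) - 1) * hr2
  linarith
end
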